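/- Let (W,S) be a Coxeter system with S finite, let ((s,w),m) be a complete marking with support J and shadow J̃, and let j ∈ S∖(J̃ ∪ J⊥) be such that the product s·(wjw⁻¹) has finite order. Then ((s,wj),m) is a complete marking; in particular (s,wj) is a base with some support J', m ∈ S∖J'⊥, and s·(wj)m(wj)⁻¹ has infinite order. -/

import Mathlib

variable {B : Type*} {W : Type*} [Group W] {M : CoxeterMatrix B}

/-- A subset `J` of the index set is *spherical* if the corresponding simple reflections
generate a finite subgroup. -/
def Spherical (cs : CoxeterSystem M W) (J : Set B) : Prop :=
  (Subgroup.closure (cs.simple '' J) : Set W).Finite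

/-- Two indices are *adjacent* if the corresponding simple reflections generate a finite
subgroup. -/
def Adjacent (cs : CoxeterSystem M W) (i j : B) : Prop :=
  (Subgroup.closure {cs.simple i, cs.simple j} : Set W).Finite

/-- A subset is *2-spherical* if every pair of its elements is adjacent. -/
def TwoSpherical (cs : CoxeterSystem M W) (J : Set B) : Prop :=
  ∀ i ∈ J, ∀ j ∈ J, Adjacent cs i j

/-- A subset is *irreducible* if it cannot be partitioned into two nonempty subsets whose
corresponding simple reflections commute elementwise. -/
def IrreducibleSubset (cs : CoxeterSystem M W) (J : Set B) : Prop :=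
  ¬ ∃ K L : Set B, K.Nonempty ∧ L.Nonempty ∧ Disjoint K L ∧ K ∪ L = J ∧
      ∀ k ∈ K, ∀ l ∈ L, Commute (cs.simple k) (cs.simple l)

/-- `perpIn cs T J` is the set `J⊥` of elements of `T ∖ J` whose simple reflections commute
with those of every element of `J`. -/
def perpIn (cs : CoxeterSystem M W) (T J : Set B) : Set B :=
  {i ∈ T \ J | ∀ j ∈ J, Commute (cs.simple i) (cs.simple j)}

/-- A subset `T` of the index set is *connected* if any two of its elements are joined by a
path inside `T` whose edges are adjacent pairs. -/
def ConnectedIn (cs : CoxeterSystem M W) (T : Set B) : Prop :=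
  ∀ a ∈ T, ∀ b ∈ T,
    Relation.ReflTransGen (fun x y => x ∈ T ∧ y ∈ T ∧ Adjacent cs x y) a b

/-- A subset `T` is *twist-rigid* if for every irreducible spherical subset `L ⊆ T` the set
`T ∖ (L ∪ L⊥)` is connected, where `L⊥` is taken inside `T`. -/
def TwistRigidIn (cs : CoxeterSystem M W) (T : Set B) : Prop :=
  ∀ L ⊆ T, IrreducibleSubset cs L → Spherical cs L →
    ConnectedIn cs (T \ (L ∪ perpIn cs T L))

/-- A pair `(s, w)` is a *base* if `ℓ(w⁻¹ s w) = 2 ℓ(w) + 1` and every reflection `t` with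
`ℓ(t w) < ℓ(w)` generates together with `s` a finite subgroup. -/
def IsBase (cs : CoxeterSystem M W) (s : B) (w : W) : Prop :=
  cs.length (w⁻¹ * cs.simple s * w) = 2 * cs.length w + 1 ∧
    ∀ t : W, cs.IsReflection t → cs.length (t * w) < cs.length w →
      (Subgroup.closure {cs.simple s, t} : Set W).Finite

/-- `J` is the *support* of `(s, w)` if it is the smallest subset of the index set containing
`s` with `w ∈ W_J`. -/
def IsSupport (cs : CoxeterSystem M W) (s : B) (w : W) (J : Set B) : Prop :=
  s ∈ J ∧ w ∈ Subgroup.closure (cs.simple '' J) ∧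
    ∀ J' : Set B, s ∈ J' → w ∈ Subgroup.closure (cs.simple '' J') → J ⊆ J'

/-- A base `(s, w)` is *simple* if `w` is represented by a reduced word whose letters are
pairwise distinct and distinct from `s`. -/
def IsSimpleBase (cs : CoxeterSystem M W) (s : B) (w : W) : Prop :=
  IsBase cs s w ∧ ∃ l : List B, w = cs.wordProd l ∧ cs.length w = l.length ∧
    l.Nodup ∧ s ∉ l

/-- The *shadow* of a base `(s, w)` with support `J`: the set of `j ∈ J` with
`ℓ((wj)⁻¹ s (wj)) ≤ ℓ(w⁻¹ s w)`. -/
def shadow (cs : CoxeterSystem M W) (s : B) (w : W) (J : Set B) : Set B :=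
  {j ∈ J | cs.length ((w * cs.simple j)⁻¹ * cs.simple s * (w * cs.simple j)) ≤
    cs.length (w⁻¹ * cs.simple s * w)}

/-!
In the geometric representation, a base `(s, w)` is governed by the root `β = w⁻¹ • α_s` of the
reflection `w⁻¹ s w`: the length condition makes `β` positive, the support is the set of nonzero
coordinates of `β`, and `s · (w m w⁻¹)` has the same order as the product of the reflections in
`β` and `α_m`.

The product of the reflections in two distinct positive roots has infinite order exactly when
their inner product has absolute value at least `1`. If it is `-cos θ`, then the powers of the
product rotate by the multiples of `2θ`; were these dense modulo `2π`, a rotated root would have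
coefficients of both signs. The product `⟨β, α_m⟩ ≥ 1` is excluded for a base, so completeness of
the marking means `⟨β, α_m⟩ ≤ -1`.

If `j` lies neither in the shadow nor in `J⊥`, then `⟨β, α_j⟩ < 0`. Hence conjugating `w⁻¹ s w` by
`j` increases its length by two, `(s, wj)` is a base, and its root is `β - 2⟨β, α_j⟩α_j`. As
`⟨α_j, α_m⟩ ≤ 0`, the product with `α_m` can only decrease.
-/

section GroupTheory

open scoped Pointwise

variable {G : Type*} [Group G] {a x s t : G}

lemma isOfFinOrder_of_commute_zpow {n : ℤ} (hn : n ≠ 0) (hinv : a * x * a⁻¹ = x⁻¹)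
    (hcomm : Commute a (x ^ n)) : IsOfFinOrder x := by
  have hself : x ^ n = x ^ (-n) := by
    calc x ^ n = a * x ^ n * a⁻¹ := by rw [hcomm.eq, mul_inv_cancel_right]
      _ = x ^ (-n) := by rw [← conj_zpow, hinv, inv_zpow, zpow_neg]
  refine isOfFinOrder_iff_zpow_eq_one.2 ⟨n + n, by lia, ?_⟩
  rw [zpow_add]
  nth_rewrite 1 [hself]
  rw [zpow_neg, inv_mul_cancel]

lemma closure_pair_finite_iff (hs : s * s = 1) (ht : t * t = 1) :
    (Subgroup.closure {s, t} : Set G).Finite ↔ IsOfFinOrder (s * t) := by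
  have hs' : s⁻¹ = s := inv_eq_of_mul_eq_one_left hs
  have ht' : t⁻¹ = t := inv_eq_of_mul_eq_one_left ht
  constructor
  · intro hfin
    have hmem : s * t ∈ Subgroup.closure {s, t} :=
      mul_mem (Subgroup.subset_closure (by simp)) (Subgroup.subset_closure (by simp))
    exact finite_zpowers.1 (hfin.subset (Subgroup.zpowers_le.2 hmem))
  · intro hfin
    have hsorder : IsOfFinOrder s := isOfFinOrder_iff_pow_eq_one.2 ⟨2, two_pos, by rw [sq, hs]⟩
    have hnorm : Subgroup.zpowers s ≤ Subgroup.normalizer (Subgroup.zpowers (s * t)) := by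
      rw [Subgroup.zpowers_le, Subgroup.mem_normalizer_iff_map_conj_eq, MonoidHom.map_zpowers]
      have hconj : MulAut.conj s (s * t) = (s * t)⁻¹ := by
        rw [MulAut.conj_apply, mul_inv_rev, hs', ht', ← mul_assoc s, hs, one_mul]
      exact (congrArg Subgroup.zpowers hconj).trans Subgroup.zpowers_inv
    have hsub : (Subgroup.closure {s, t} : Set G) ⊆
        (Subgroup.zpowers s : Set G) * (Subgroup.zpowers (s * t) : Set G) := by
      rw [← Subgroup.coe_mul_of_left_le_normalizer_right _ _ hnorm, SetLike.coe_subset_coe,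
        Subgroup.closure_le, Set.pair_subset_iff]
      have hmem : s ∈ Subgroup.zpowers s ⊔ Subgroup.zpowers (s * t) :=
        Subgroup.mem_sup_left (Subgroup.mem_zpowers s)
      refine ⟨hmem, ?_⟩
      simpa [← mul_assoc, hs] using
        mul_mem hmem (Subgroup.mem_sup_right (Subgroup.mem_zpowers (s * t)))
    exact ((finite_zpowers.2 hsorder).mul (finite_zpowers.2 hfin)).subset hsub

end GroupTheory

section TwoReflections

open Polynomial.Chebyshev

lemma eval_U_two_mul_and_sub_one {R : Type*} [CommRing R] (c : R) (n : ℤ) :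
    (U R (2 * n)).eval c = (S R n).eval (4 * c ^ 2 - 2) + (S R (n - 1)).eval (4 * c ^ 2 - 2) ∧
      (U R (2 * n - 1)).eval c = 2 * c * (S R (n - 1)).eval (4 * c ^ 2 - 2) := by
  have hU (k : ℤ) : (U R (k + 1)).eval c = 2 * c * (U R k).eval c - (U R (k - 1)).eval c := by
    simp [U_add_one]
  have hS (k : ℤ) : (S R (k + 1)).eval (4 * c ^ 2 - 2) =
      (4 * c ^ 2 - 2) * (S R k).eval (4 * c ^ 2 - 2) - (S R (k - 1)).eval (4 * c ^ 2 - 2) := by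
    simp [S_add_one]
  induction n with
  | zero => simp
  | succ n ih =>
    obtain ⟨heven, hodd⟩ := ih
    constructor
    · linear_combination (norm := ring_nf) hU (2 * n + 1) + 2 * c * hU (2 * n) - hS n +
        (4 * c ^ 2 - 1) * heven - 2 * c * hodd
    · linear_combination (norm := ring_nf) hU (2 * n) + 2 * c * heven - hodd
  | pred n ih =>
    obtain ⟨heven, hodd⟩ := ih
    constructor
    · linear_combination (norm := ring_nf) hU (2 * -n - 1) + 2 * c * hodd - heven - hS (-n - 1)
    · linear_combination (norm := ring_nf) hU (2 * -n - 2) + 2 * c * hU (2 * -n - 1) -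
        2 * c * heven + (4 * c ^ 2 - 1) * hodd - 2 * c * hS (-n - 1)

section Module

open Module

lemma reflection_mul_reflection_zpow_apply_left {R V : Type*} [CommRing R] [AddCommGroup V]
    [Module R V] {x y : V} {f g : Dual R V} {c : R} (hf : f x = 2) (hg : g y = 2)
    (hfy : f y = -(2 * c)) (hgx : g x = -(2 * c)) (n : ℤ) :
    ((reflection hf * reflection hg) ^ n) x =
      (U R (2 * n)).eval c • x + (U R (2 * n - 1)).eval c • y := by
  have ht : 4 * c ^ 2 - 2 = f y * g x - 2 := by rw [hfy, hgx]; ring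
  obtain ⟨heven, hodd⟩ := eval_U_two_mul_and_sub_one c n
  rw [reflection_mul_reflection_zpow_apply_self hf hg n _ ht, hgx, heven, hodd]
  module

lemma reflection_mul_reflection_zpow_eq_one {K V : Type*} [Field K] [NeZero (2 : K)]
    [AddCommGroup V] [Module K V] {x y : V} {f g : Dual K V} {c : K} (hf : f x = 2) (hg : g y = 2)
    (hfy : f y = -(2 * c)) (hgx : g x = -(2 * c)) (hc : c ^ 2 ≠ 1) {n : ℤ}
    (heven : (U K (2 * n)).eval c = 1) (hodd : (U K (2 * n - 1)).eval c = 0) :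
    (reflection hf * reflection hg) ^ n = 1 := by
  set ρ := reflection hf * reflection hg with hρdef
  have hρx : (ρ ^ n) x = x := by
    rw [reflection_mul_reflection_zpow_apply_left hf hg hfy hgx, heven, hodd]
    module
  have hρy : (ρ ^ n) y = y := by
    have hinv : (ρ⁻¹ ^ n) y = y := by
      rw [hρdef, mul_inv_rev, reflection_inv, reflection_inv,
        reflection_mul_reflection_zpow_apply_left hg hf hgx hfy, heven, hodd]
      module
    rw [inv_zpow] at hinv
    exact ((ρ ^ n).symm_apply_eq.1 hinv).symm
  ext v
  have hc' : 1 - c ^ 2 ≠ 0 := sub_ne_zero.2 hc.symm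
  have htwo : (2 : K) ≠ 0 := two_ne_zero
  -- The component of `v` in the plane of `x` and `y`.
  set p : V := ((f v + c * g v) / (2 * (1 - c ^ 2))) • x +
    ((g v + c * f v) / (2 * (1 - c ^ 2))) • y with hp
  have hfp : f (v - p) = 0 := by
    simp only [hp, map_sub, map_add, map_smul, hf, hfy, smul_eq_mul]
    field_simp
    ring
  have hgp : g (v - p) = 0 := by
    simp only [hp, map_sub, map_add, map_smul, hg, hgx, smul_eq_mul]
    field_simp
    ring
  have hρ : ρ (v - p) = v - p := by
    simp [ρ, LinearEquiv.mul_apply, reflection_apply, hfp, hgp]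
  have hρn : (ρ ^ n) (v - p) = v - p := by
    have hmem : ρ ∈ MulAction.stabilizer (V ≃ₗ[K] V) (v - p) := hρ
    exact zpow_mem hmem n
  have hρp : (ρ ^ n) p = p := by simp only [hp, map_add, map_smul, hρx, hρy]
  calc (ρ ^ n) v = (ρ ^ n) (v - p) + (ρ ^ n) p := by rw [← map_add, sub_add_cancel]
    _ = v := by rw [hρn, hρp, sub_add_cancel]

end Module

section Real

variable {c : ℝ}

lemma eval_U_pos_of_one_le (hc : 1 ≤ c) (n : ℕ) : 0 < (U ℝ n).eval c := by
  suffices h : 0 < (U ℝ n).eval c ∧ (U ℝ n).eval c ≤ (U ℝ (n + 1)).eval c from h.1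
  induction n with
  | zero => simp; linarith
  | succ n ih =>
    obtain ⟨hpos, hmono⟩ := ih
    push_cast
    refine ⟨hpos.trans_le hmono, ?_⟩
    rw [add_assoc, one_add_one_eq_two, U_add_two]
    simp only [Polynomial.eval_sub, Polynomial.eval_mul, Polynomial.eval_ofNat, Polynomial.eval_X]
    nlinarith

lemma sin_pi_div_pos {M : ℕ} (hM : 2 ≤ M) : 0 < Real.sin (Real.pi / M) := by
  have hM' : (2 : ℝ) ≤ M := mod_cast hM
  exact Real.sin_pos_of_pos_of_lt_pi (by positivity) (div_lt_self Real.pi_pos (by linarith))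

lemma eval_U_cos_pi_div_of_two_le {M : ℕ} (hM : 2 ≤ M) :
    (U ℝ (2 * M)).eval (Real.cos (Real.pi / M)) = 1 ∧
      (U ℝ (2 * M - 1)).eval (Real.cos (Real.pi / M)) = 0 := by
  have hsin := (sin_pi_div_pos hM).ne'
  have hangle : M * (Real.pi / M) = Real.pi := mul_div_cancel₀ _ (by positivity)
  constructor
  · refine mul_right_cancel₀ hsin ?_
    rw [U_real_cos, one_mul, ← Real.sin_add_two_pi (Real.pi / M)]
    push_cast
    congr 1
    linear_combination 2 * hangle
  · refine mul_right_cancel₀ hsin ?_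
    rw [U_real_cos, zero_mul, ← Real.sin_two_pi]
    push_cast
    congr 1
    linear_combination 2 * hangle

lemma eval_U_sub_one_cos_pi_div_nonneg {M k : ℕ} (hk : M = 0 ∨ k ≤ M) :
    0 ≤ (U ℝ (k - 1)).eval (Real.cos (Real.pi / M)) := by
  obtain rfl | hM := Nat.eq_zero_or_pos M
  · simp [U_eval_one]
  have hkM : k ≤ M := hk.resolve_left hM.ne'
  obtain rfl | hM1 := eq_or_ne M 1
  · interval_cases k <;> simp
  have hangle : k * (Real.pi / M) ≤ Real.pi := by
    rw [mul_div_left_comm]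
    exact mul_le_of_le_one_right Real.pi_pos.le ((div_le_one (by positivity)).2 (mod_cast hkM))
  have hprod : (U ℝ (k - 1)).eval (Real.cos (Real.pi / M)) * Real.sin (Real.pi / M) =
      Real.sin (k * (Real.pi / M)) := by
    rw [U_real_cos]
    push_cast
    rw [sub_add_cancel]
  refine nonneg_of_mul_nonneg_left ?_ (sin_pi_div_pos (by lia : 2 ≤ M))
  rw [hprod]
  exact Real.sin_nonneg_of_nonneg_of_le_pi (by positivity) hangle

end Real

end TwoReflections

namespace GeometricRep

open Real Polynomial.Chebyshev

section BilinearForm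

/-- The simple root `α_i`, a basis vector of the space carrying the geometric representation. -/
noncomputable def simpleRoot (i : B) : B →₀ ℝ := Finsupp.single i 1

lemma simpleRoot_apply_self (i : B) : simpleRoot i i = 1 := Finsupp.single_eq_same

lemma simpleRoot_apply_of_ne {i j : B} (hij : i ≠ j) : simpleRoot j i = 0 :=
  Finsupp.single_eq_of_ne hij

variable (M)

/-- The canonical bilinear form of a Coxeter matrix, given on simple roots by
`⟨α_i, α_j⟩ = -cos (π / M i j)`; an infinite label, encoded as `M i j = 0`, gives `-1`. -/
noncomputable def bilForm : (B →₀ ℝ) →ₗ[ℝ] (B →₀ ℝ) →ₗ[ℝ] ℝ :=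
  Finsupp.linearCombination ℝ fun i =>
    Finsupp.linearCombination ℝ fun j => -cos (π / (M i j : ℝ))

lemma bilForm_simpleRoot (i j : B) :
    bilForm M (simpleRoot i) (simpleRoot j) = -cos (π / (M i j : ℝ)) := by
  simp [bilForm, simpleRoot]

lemma bilForm_comm (x y : B →₀ ℝ) : bilForm M x y = bilForm M y x := by
  suffices h : bilForm M = (bilForm M).flip from congrArg (fun f => f x y) h
  ext i j
  simp [bilForm, M.symmetric j i]

lemma bilForm_simpleRoot_self (i : B) : bilForm M (simpleRoot i) (simpleRoot i) = 1 := by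
  simp [bilForm_simpleRoot]

lemma bilForm_simpleRoot_right (v : B →₀ ℝ) (j : B) :
    bilForm M v (simpleRoot j) = v.sum fun i a => a * bilForm M (simpleRoot i) (simpleRoot j) := by
  simp [bilForm, simpleRoot, Finsupp.linearCombination_apply, Finsupp.sum, LinearMap.sum_apply]

variable {M} {i j : B}

lemma label_eq_zero_or_two_le (hij : i ≠ j) : M i j = 0 ∨ 2 ≤ M i j := by
  have := M.off_diagonal i j hij
  lia

lemma bilForm_simpleRoot_nonpos (hij : i ≠ j) :
    bilForm M (simpleRoot i) (simpleRoot j) ≤ 0 := by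
  rw [bilForm_simpleRoot, neg_nonpos]
  obtain hM | hM := label_eq_zero_or_two_le (M := M) hij
  · simp [hM]
  · have hM' : (2 : ℝ) ≤ M i j := mod_cast hM
    have hangle : 0 ≤ π / (M i j : ℝ) := by positivity
    exact cos_nonneg_of_neg_pi_div_two_le_of_le (by linarith [pi_pos]) (by gcongr)

lemma label_eq_two_of_bilForm_eq_zero (hij : i ≠ j)
    (h : bilForm M (simpleRoot i) (simpleRoot j) = 0) : M i j = 2 := by
  rw [bilForm_simpleRoot, neg_eq_zero] at h
  obtain hM | hM := label_eq_zero_or_two_le (M := M) hij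
  · simp [hM] at h
  · refine hM.antisymm' (le_of_not_gt fun hlt => ?_)
    have hM' : (2 : ℝ) < M i j := mod_cast hlt
    have hangle : 0 ≤ π / (M i j : ℝ) := by positivity
    exact (cos_pos_of_mem_Ioo ⟨by linarith [pi_pos], by gcongr⟩).ne' h

end BilinearForm

section Reflections

variable {β γ : B →₀ ℝ}

/-- The orthogonal reflection `v ↦ v - 2 ⟨β, v⟩ β` in a vector `β` of norm one for the
canonical form. -/
noncomputable def unitReflection (hβ : bilForm M β β = 1) : (B →₀ ℝ) ≃ₗ[ℝ] (B →₀ ℝ) :=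
  Module.reflection (x := β) (f := (2 : ℝ) • bilForm M β) (by simp [hβ])

lemma unitReflection_apply (hβ : bilForm M β β = 1) (v : B →₀ ℝ) :
    unitReflection hβ v = v - (2 * bilForm M β v) • β := by
  simp [unitReflection, Module.reflection_apply]

lemma unitReflection_mul_self (hβ : bilForm M β β = 1) :
    unitReflection hβ * unitReflection hβ = 1 :=
  mul_eq_one_iff_eq_inv.2 (Module.reflection_inv _).symm

lemma unitReflection_mul_zpow_apply_left (hβ : bilForm M β β = 1) (hγ : bilForm M γ γ = 1) {c : ℝ}
    (hc : bilForm M β γ = -c) (n : ℤ) :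
    ((unitReflection hβ * unitReflection hγ) ^ n) β =
      (U ℝ (2 * n)).eval c • β + (U ℝ (2 * n - 1)).eval c • γ :=
  reflection_mul_reflection_zpow_apply_left _ _ (by simp [hc]) (by simp [bilForm_comm M γ, hc]) n

lemma isLiftable_unitReflection :
    M.IsLiftable fun i => unitReflection (bilForm_simpleRoot_self M i) := by
  intro i j
  obtain rfl | hij := eq_or_ne i j
  · simp [unitReflection_mul_self]
  obtain hM | hM := label_eq_zero_or_two_le (M := M) hij
  · simp [hM]
  set c := cos (π / (M i j : ℝ)) with hcdef
  have hij' : bilForm M (simpleRoot i) (simpleRoot j) = -c := bilForm_simpleRoot M i j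
  have hji' : bilForm M (simpleRoot j) (simpleRoot i) = -c := by rw [bilForm_comm, hij']
  have hc : c ^ 2 ≠ 1 := by
    have hsin := sin_pi_div_pos hM
    have hsq := sin_sq_add_cos_sq (π / (M i j : ℝ))
    rw [← hcdef] at hsq
    nlinarith
  obtain ⟨heven, hodd⟩ := eval_U_cos_pi_div_of_two_le hM
  rw [← zpow_natCast]
  exact reflection_mul_reflection_zpow_eq_one _ _ (by simp [hij']) (by simp [hji']) hc heven hodd

end Reflections

variable (cs : CoxeterSystem M W)

/-- The geometric (Tits) representation, in which `s_i` acts as the reflection in `α_i`. -/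
noncomputable def geomRep : W →* ((B →₀ ℝ) ≃ₗ[ℝ] (B →₀ ℝ)) :=
  cs.lift ⟨_, isLiftable_unitReflection⟩

lemma geomRep_simple (i : B) :
    geomRep cs (cs.simple i) = unitReflection (bilForm_simpleRoot_self M i) :=
  cs.lift_apply_simple isLiftable_unitReflection i

lemma geomRep_simple_apply (i : B) (v : B →₀ ℝ) :
    geomRep cs (cs.simple i) v = v - (2 * bilForm M (simpleRoot i) v) • simpleRoot i := by
  rw [geomRep_simple, unitReflection_apply]

lemma geomRep_mul_apply (u w : W) (v : B →₀ ℝ) :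
    geomRep cs (u * w) v = geomRep cs u (geomRep cs w v) := by
  rw [map_mul, LinearEquiv.mul_apply]

lemma geomRep_inv_apply_self (w : W) (v : B →₀ ℝ) : geomRep cs w⁻¹ (geomRep cs w v) = v := by
  rw [← geomRep_mul_apply, inv_mul_cancel, map_one]
  rfl

lemma geomRep_self_apply_inv (w : W) (v : B →₀ ℝ) : geomRep cs w (geomRep cs w⁻¹ v) = v := by
  rw [← geomRep_mul_apply, mul_inv_cancel, map_one]
  rfl

lemma geomRep_simple_simpleRoot (i : B) :
    geomRep cs (cs.simple i) (simpleRoot i) = -simpleRoot i := by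
  rw [geomRep_simple_apply, bilForm_simpleRoot_self]
  module

lemma bilForm_geomRep (w : W) (x y : B →₀ ℝ) :
    bilForm M (geomRep cs w x) (geomRep cs w y) = bilForm M x y := by
  induction w using cs.simple_induction_left generalizing x y with
  | one => simp
  | mul_simple_left w i ih =>
    simp only [geomRep_mul_apply, geomRep_simple_apply, map_sub, map_smul, LinearMap.sub_apply,
      LinearMap.smul_apply, bilForm_simpleRoot_self, smul_eq_mul, ih,
      bilForm_comm M _ (simpleRoot i)]
    ring

section Positivity

open CoxeterSystem (alternatingWord)

lemma exists_eq_mul_wordProd_alternatingWord (w : W) {a : B} (b : B)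
    (ha : ¬cs.IsRightDescent w a) :
    ∃ (v : W) (k : ℕ), w = v * cs.wordProd (alternatingWord a b k) ∧
      cs.length w = cs.length v + k ∧ ¬cs.IsRightDescent v a ∧ ¬cs.IsRightDescent v b := by
  induction hn : cs.length w using Nat.strong_induction_on generalizing w a b with
  | _ n ih =>
    by_cases hb : cs.IsRightDescent w b
    · have hlen := cs.isRightDescent_iff.1 hb
      obtain ⟨v, k, hw, hlen', hvb, hva⟩ := ih _ (by lia) (w * cs.simple b) a
        (cs.isRightDescent_iff_not_isRightDescent_mul.1 hb) rfl
      refine ⟨v, k + 1, ?_, by lia, hva, hvb⟩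
      rw [CoxeterSystem.alternatingWord_succ, cs.wordProd_concat, ← mul_assoc, ← hw,
        cs.simple_mul_simple_cancel_right]
    · exact ⟨w, 0, by simp [alternatingWord], by simp [hn], ha, hb⟩

lemma label_bound_of_length_mul_alternatingWord {v : W} {a b : B} {k : ℕ}
    (h : cs.length (v * cs.wordProd (alternatingWord a b k)) = cs.length v + k) :
    M a b = 0 ∨ k ≤ M a b := by
  by_contra! hcon
  refine cs.not_isReduced_alternatingWord a b hcon.1 hcon.2 ?_
  have hle := cs.length_mul_le v (cs.wordProd (alternatingWord a b k))
  have hle' := cs.length_wordProd_le (alternatingWord a b k)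
  rw [CoxeterSystem.length_alternatingWord] at hle'
  rw [CoxeterSystem.IsReduced, CoxeterSystem.length_alternatingWord]
  lia

lemma geomRep_alternatingWord_simpleRoot (a b : B) (k : ℕ) :
    geomRep cs (cs.wordProd (alternatingWord a b k)) (simpleRoot a) =
      if Even k then
        (U ℝ k).eval (cos (π / M a b)) • simpleRoot a +
          (U ℝ (k - 1)).eval (cos (π / M a b)) • simpleRoot b
      else
        (U ℝ (k - 1)).eval (cos (π / M a b)) • simpleRoot a +
          (U ℝ k).eval (cos (π / M a b)) • simpleRoot b := by
  have hab := bilForm_simpleRoot M a b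
  have hba := bilForm_simpleRoot M b a
  rw [M.symmetric b a] at hba
  induction k with
  | zero => simp [alternatingWord]
  | succ k ih =>
    have hrec : (U ℝ (k + 1)).eval (cos (π / M a b)) = 2 * cos (π / M a b) *
        (U ℝ k).eval (cos (π / M a b)) - (U ℝ (k - 1)).eval (cos (π / M a b)) := by
      simp [U_add_one]
    rw [CoxeterSystem.alternatingWord_succ', cs.wordProd_cons, geomRep_mul_apply, ih]
    push_cast
    rw [add_sub_cancel_right, hrec]
    by_cases hk : Even k <;>
      simp only [hk, Nat.even_add_one, not_true_eq_false, not_false_eq_true, if_true, if_false,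
        geomRep_simple_apply, map_add, map_smul, hab, hba, bilForm_simpleRoot_self] <;>
      module

variable {cs} {w : W} {i : B}

lemma simpleRoot_nonneg (i : B) : 0 ≤ simpleRoot i := Finsupp.single_nonneg.2 zero_le_one

lemma simpleRoot_ne_zero (i : B) : simpleRoot i ≠ 0 := by simp [simpleRoot]

theorem geomRep_simpleRoot_nonneg (h : ¬cs.IsRightDescent w i) :
    0 ≤ geomRep cs w (simpleRoot i) := by
  induction hn : cs.length w using Nat.strong_induction_on generalizing w i with
  | _ n ih =>
    by_cases hw : w = 1
    · subst hw
      simpa using simpleRoot_nonneg i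
    obtain ⟨b, hb⟩ := cs.exists_rightDescent_of_ne_one hw
    obtain ⟨v, k, rfl, hlen, hvi, hvb⟩ := exists_eq_mul_wordProd_alternatingWord cs w b h
    have hk : k ≠ 0 := by
      rintro rfl
      exact hvb (by simpa [alternatingWord] using hb)
    have hbound : M i b = 0 ∨ k + 1 ≤ M i b := by
      rw [M.symmetric]
      refine label_bound_of_length_mul_alternatingWord cs (v := v) ?_
      rw [CoxeterSystem.alternatingWord_succ, cs.wordProd_concat, ← mul_assoc,
        cs.not_isRightDescent_iff.1 h, hlen, add_assoc]
    have hposi := ih _ (by lia) hvi rfl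
    have hposb := ih _ (by lia) hvb rfl
    have hU := eval_U_sub_one_cos_pi_div_nonneg hbound
    have hU' := eval_U_sub_one_cos_pi_div_nonneg (hbound.imp_right (Nat.le_of_succ_le))
    push_cast at hU
    rw [add_sub_cancel_right] at hU
    rw [geomRep_mul_apply, geomRep_alternatingWord_simpleRoot]
    split_ifs <;> simp only [map_add, map_smul] <;>
      exact add_nonneg (smul_nonneg ‹_› hposi) (smul_nonneg ‹_› hposb)

lemma geomRep_simpleRoot_nonpos (h : cs.IsRightDescent w i) :
    geomRep cs w (simpleRoot i) ≤ 0 := by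
  have hpos := geomRep_simpleRoot_nonneg (cs.isRightDescent_iff_not_isRightDescent_mul.1 h)
  rw [geomRep_mul_apply, geomRep_simple_simpleRoot, map_neg] at hpos
  exact neg_nonneg.1 hpos

lemma geomRep_injective : Function.Injective (geomRep cs) := by
  refine (injective_iff_map_eq_one _).2 fun w hw => ?_
  by_contra hne
  obtain ⟨b, hb⟩ := cs.exists_rightDescent_of_ne_one hne
  have hneg := geomRep_simpleRoot_nonpos hb
  rw [hw] at hneg
  exact simpleRoot_ne_zero b (hneg.antisymm (simpleRoot_nonneg b))

lemma not_isRightDescent_of_geomRep_nonneg (h : 0 ≤ geomRep cs w (simpleRoot i)) :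
    ¬cs.IsRightDescent w i := fun hdesc =>
  simpleRoot_ne_zero i ((geomRep cs w).map_eq_zero_iff.1
    ((geomRep_simpleRoot_nonpos hdesc).antisymm h))

end Positivity

section Roots

/-- `β` is one of the two roots `± u • α_i` of the reflection `t = u s_i u⁻¹`. -/
def IsRootOf (β : B →₀ ℝ) (t : W) : Prop :=
  ∃ u i, β = geomRep cs u (simpleRoot i) ∧ t = u * cs.simple i * u⁻¹

lemma isRootOf_simple (i : B) : IsRootOf cs (simpleRoot i) (cs.simple i) :=
  ⟨1, i, by simp, by simp⟩

variable {cs} {β : B →₀ ℝ} {t r w : W} {i j : B}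

namespace IsRootOf

lemma isReflection (h : IsRootOf cs β t) : cs.IsReflection t := by
  obtain ⟨u, i, -, rfl⟩ := h
  exact ⟨u, i, rfl⟩

lemma conj (h : IsRootOf cs β t) (w : W) : IsRootOf cs (geomRep cs w β) (w * t * w⁻¹) := by
  obtain ⟨u, i, rfl, rfl⟩ := h
  exact ⟨w * u, i, (geomRep_mul_apply cs w u _).symm, by simp only [mul_inv_rev, mul_assoc]⟩

lemma neg (h : IsRootOf cs β t) : IsRootOf cs (-β) t := by
  obtain ⟨u, i, rfl, rfl⟩ := h
  refine ⟨u * cs.simple i, i, ?_, by simp [mul_assoc]⟩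
  rw [geomRep_mul_apply, geomRep_simple_simpleRoot, map_neg]

lemma bilForm_self (h : IsRootOf cs β t) : bilForm M β β = 1 := by
  obtain ⟨u, i, rfl, -⟩ := h
  rw [bilForm_geomRep, bilForm_simpleRoot_self]

lemma ne_zero (h : IsRootOf cs β t) : β ≠ 0 := by
  rintro rfl
  simpa using h.bilForm_self

lemma geomRep_apply (h : IsRootOf cs β t) (v : B →₀ ℝ) :
    geomRep cs t v = v - (2 * bilForm M β v) • β := by
  obtain ⟨u, i, rfl, rfl⟩ := h
  obtain ⟨v, rfl⟩ := (geomRep cs u).surjective v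
  rw [bilForm_geomRep, geomRep_mul_apply, geomRep_mul_apply, geomRep_inv_apply_self,
    geomRep_simple_apply, map_sub, map_smul]

lemma geomRep_eq (h : IsRootOf cs β t) : geomRep cs t = unitReflection h.bilForm_self :=
  LinearEquiv.ext fun v => by rw [h.geomRep_apply, unitReflection_apply]

lemma unique (ht : IsRootOf cs β t) (hr : IsRootOf cs β r) : t = r :=
  geomRep_injective (cs := cs) (ht.geomRep_eq.trans hr.geomRep_eq.symm)

lemma nonneg_or_nonpos (h : IsRootOf cs β t) : 0 ≤ β ∨ β ≤ 0 := by
  obtain ⟨u, i, rfl, -⟩ := h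
  by_cases hu : cs.IsRightDescent u i
  · exact .inr (geomRep_simpleRoot_nonpos hu)
  · exact .inl (geomRep_simpleRoot_nonneg hu)

lemma nonneg_of_apply_pos (h : IsRootOf cs β t) (hi : 0 < β i) : 0 ≤ β :=
  h.nonneg_or_nonpos.resolve_right fun h0 => (h0 i).not_gt hi

lemma exists_apply_pos_of_ne_simpleRoot (h : IsRootOf cs β t) (h0 : 0 ≤ β)
    (hne : β ≠ simpleRoot j) : ∃ i ≠ j, 0 < β i := by
  by_contra! hcon
  have hβ : β = β j • simpleRoot j := by
    ext i
    obtain rfl | hij := eq_or_ne i j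
    · simp [simpleRoot_apply_self]
    · simp [simpleRoot_apply_of_ne hij, (hcon i hij).antisymm (h0 i)]
  have hnorm : β j * β j = 1 := by
    have := h.bilForm_self
    rwa [hβ, map_smul, map_smul, LinearMap.smul_apply, bilForm_simpleRoot_self, smul_eq_mul,
      smul_eq_mul, mul_one] at this
  have hj : β j = 1 := by nlinarith [show 0 ≤ β j from h0 j]
  exact hne (by rw [hβ, hj, one_smul])

lemma geomRep_simple_nonneg (h : IsRootOf cs β t) (h0 : 0 ≤ β) (hne : β ≠ simpleRoot j) :
    0 ≤ geomRep cs (cs.simple j) β := by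
  obtain ⟨i, hij, hi⟩ := h.exists_apply_pos_of_ne_simpleRoot h0 hne
  refine (h.conj (cs.simple j)).nonneg_of_apply_pos (i := i) ?_
  simpa [geomRep_simple_apply, simpleRoot_apply_of_ne hij] using hi

lemma isRightInversion_of_geomRep_nonpos (h : IsRootOf cs β t) (h0 : 0 ≤ β)
    (hw : geomRep cs w β ≤ 0) : cs.IsRightInversion w t := by
  induction hn : cs.length w generalizing w β t with
  | zero =>
    rw [cs.length_eq_zero_iff.1 hn, map_one] at hw
    exact absurd (hw.antisymm h0) h.ne_zero
  | succ n ih =>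
    have hne : w ≠ 1 := fun h1 => by simp [h1] at hn
    obtain ⟨b, hb⟩ := cs.exists_rightDescent_of_ne_one hne
    refine ⟨h.isReflection, ?_⟩
    obtain rfl | hβ := eq_or_ne β (simpleRoot b)
    · rwa [h.unique (isRootOf_simple cs b)]
    have hlen := cs.isRightDescent_iff.1 hb
    obtain ⟨-, hlt⟩ := ih (w := w * cs.simple b) (h.conj (cs.simple b))
      (h.geomRep_simple_nonneg h0 hβ)
      (by rwa [← geomRep_mul_apply, cs.simple_mul_simple_cancel_right]) (by lia)
    have hle := cs.length_mul_le (w * cs.simple b * (cs.simple b * t * (cs.simple b)⁻¹))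
      (cs.simple b)
    have heq : w * cs.simple b * (cs.simple b * t * (cs.simple b)⁻¹) * cs.simple b = w * t := by
      simp [mul_assoc]
    rw [heq, cs.length_simple] at hle
    lia

lemma isRightInversion_iff (h : IsRootOf cs β t) (h0 : 0 ≤ β) :
    cs.IsRightInversion w t ↔ geomRep cs w β ≤ 0 := by
  refine ⟨fun hinv => (h.conj w).nonneg_or_nonpos.resolve_left fun hpos => ?_,
    h.isRightInversion_of_geomRep_nonpos h0⟩
  have hmul : geomRep cs (w * t) β = -geomRep cs w β := by
    rw [geomRep_mul_apply, h.geomRep_apply, h.bilForm_self, ← map_neg]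
    congr 1
    module
  have := h.isRightInversion_of_geomRep_nonpos (w := w * t) h0
    (hmul ▸ neg_nonpos.2 hpos)
  exact h.isReflection.isRightInversion_mul_left_iff.1 this hinv

lemma isLeftInversion_iff (h : IsRootOf cs β t) (h0 : 0 ≤ β) :
    cs.IsLeftInversion w t ↔ geomRep cs w⁻¹ β ≤ 0 := by
  rw [← h.isRightInversion_iff h0, cs.isRightInversion_inv_iff]

end IsRootOf

lemma exists_nonneg_isRootOf (ht : cs.IsReflection t) : ∃ β, IsRootOf cs β t ∧ 0 ≤ β := by
  obtain ⟨u, i, rfl⟩ := ht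
  have h := (isRootOf_simple cs i).conj u
  obtain h0 | h0 := h.nonneg_or_nonpos
  · exact ⟨_, h, h0⟩
  · exact ⟨_, h.neg, neg_nonneg.2 h0⟩

lemma eq_conj_of_isLeftInversion_mul_simple (h : cs.IsLeftInversion (w * cs.simple j) t)
    (hw : ¬cs.IsLeftInversion w t) : t = w * cs.simple j * w⁻¹ := by
  obtain ⟨β, hβ, h0⟩ := exists_nonneg_isRootOf h.1
  rw [hβ.isLeftInversion_iff h0] at h hw
  rw [mul_inv_rev, cs.inv_simple, geomRep_mul_apply] at h
  have hwβ := hβ.conj w⁻¹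
  have hj : geomRep cs w⁻¹ β = simpleRoot j := by
    by_contra hne
    have hpos := hwβ.geomRep_simple_nonneg (hwβ.nonneg_or_nonpos.resolve_right hw) hne
    exact (hwβ.conj _).ne_zero (h.antisymm hpos)
  rw [hj] at hwβ
  rw [← hwβ.unique (isRootOf_simple cs j)]
  group

end Roots

section RotationAngle

lemma exists_sin_neg_and_pos {θ : ℝ} (hθ : 0 < sin θ) (a : ℝ) :
    ∃ δ, sin δ < 0 ∧ 0 < sin (θ + δ) + sin δ * a := by
  have hcont : ContinuousAt (fun δ => sin (θ + δ) + sin δ * a) 0 := by fun_prop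
  have hnear : ∀ᶠ δ in nhdsWithin (0 : ℝ) (Set.Iio 0), 0 < sin (θ + δ) + sin δ * a :=
    (hcont.eventually_const_lt (by simpa using hθ)).filter_mono nhdsWithin_le_nhds
  have hneg : ∀ᶠ δ in nhdsWithin (0 : ℝ) (Set.Iio 0), sin δ < 0 := by
    filter_upwards [Ioo_mem_nhdsLT (neg_neg_of_pos pi_pos)] with δ hδ
    exact sin_neg_of_neg_of_neg_pi_lt hδ.2 hδ.1
  exact (hneg.and hnear).exists

lemma exists_int_mul_eq_or_exists_sin_neg {θ : ℝ} (hθ : 0 < sin θ) (a : ℝ) :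
    (∃ n k : ℤ, n ≠ 0 ∧ n * θ = k * π) ∨
      ∃ n : ℤ, sin (2 * n * θ) < 0 ∧ 0 < sin ((2 * n + 1) * θ) + sin (2 * n * θ) * a := by
  obtain hdense | ⟨g, hg⟩ := (AddSubgroup.closure {2 * θ, 2 * π}).dense_or_cyclic
  · have hopen : IsOpen {δ | sin δ < 0 ∧ 0 < sin (θ + δ) + sin δ * a} :=
      (isOpen_lt continuous_sin continuous_const).inter
        (isOpen_lt continuous_const
          (show Continuous fun δ => sin (θ + δ) + sin δ * a by fun_prop))
    obtain ⟨δ, hδ, hneg, hpos⟩ := hdense.exists_mem_open hopen (exists_sin_neg_and_pos hθ a)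
    obtain ⟨n, k, rfl⟩ := AddSubgroup.mem_closure_pair.1 hδ
    have hshift : sin (n • (2 * θ) + k • (2 * π)) = sin (2 * n * θ) := by
      rw [zsmul_eq_mul, zsmul_eq_mul, sin_add_int_mul_two_pi]
      ring_nf
    have hshift' : sin (θ + (n • (2 * θ) + k • (2 * π))) = sin ((2 * n + 1) * θ) := by
      rw [zsmul_eq_mul, zsmul_eq_mul, ← add_assoc, sin_add_int_mul_two_pi]
      ring_nf
    exact .inr ⟨n, hshift ▸ hneg, hshift ▸ hshift' ▸ hpos⟩
  · have hmem : ∀ x ∈ ({2 * θ, 2 * π} : Set ℝ), ∃ p : ℤ, p * g = x := fun x hx => by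
      have := AddSubgroup.subset_closure hx
      rw [hg] at this
      simpa using AddSubgroup.mem_closure_singleton.1 this
    obtain ⟨p, hp⟩ := hmem (2 * θ) (by simp)
    obtain ⟨q, hq⟩ := hmem (2 * π) (by simp)
    refine .inl ⟨q, p, ?_, by linear_combination (-q / 2 : ℝ) * hp + (p / 2 : ℝ) * hq⟩
    rintro rfl
    simp [pi_ne_zero] at hq

end RotationAngle

section RankTwo

variable {cs} {β γ : B →₀ ℝ} {t r : W} {m : B}

namespace IsRootOf

lemma geomRep_mul_zpow_apply_left (hβ : IsRootOf cs β t) (hγ : IsRootOf cs γ r) {c : ℝ}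
    (hc : bilForm M β γ = -c) (n : ℤ) :
    geomRep cs ((t * r) ^ n) β =
      (U ℝ (2 * n)).eval c • β + (U ℝ (2 * n - 1)).eval c • γ := by
  rw [map_zpow, map_mul, hβ.geomRep_eq, hγ.geomRep_eq,
    unitReflection_mul_zpow_apply_left _ _ hc]

lemma sin_smul_geomRep_mul_zpow_apply_left (hβ : IsRootOf cs β t) (hγ : IsRootOf cs γ r) {θ : ℝ}
    (hθ : bilForm M β γ = -cos θ) (n : ℤ) :
    sin θ • geomRep cs ((t * r) ^ n) β =
      sin ((2 * n + 1) * θ) • β + sin (2 * n * θ) • γ := by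
  have heven := U_real_cos θ (2 * n)
  have hodd := U_real_cos θ (2 * n - 1)
  push_cast at heven hodd
  rw [sub_add_cancel] at hodd
  rw [hβ.geomRep_mul_zpow_apply_left hγ hθ, ← heven, ← hodd]
  module

theorem not_isOfFinOrder_mul (hβ : IsRootOf cs β t) (hγ : IsRootOf cs γ r) (hne : γ ≠ -β)
    (hle : bilForm M β γ ≤ -1) : ¬IsOfFinOrder (t * r) := by
  intro hfin
  obtain ⟨n, hn, hpow⟩ := isOfFinOrder_iff_pow_eq_one.1 hfin
  obtain ⟨k, rfl⟩ := Nat.exists_eq_succ_of_ne_zero hn.ne'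
  set c := -bilForm M β γ with hc
  have hrot := hβ.geomRep_mul_zpow_apply_left hγ (c := c) (by simp [hc]) (k + 1 : ℕ)
  have hU := eval_U_pos_of_one_le (show 1 ≤ c by linarith) (2 * k + 1)
  have hidx : (2 * ((k + 1 : ℕ) : ℤ) - 1) = ((2 * k + 1 : ℕ) : ℤ) := by push_cast; ring
  rw [zpow_natCast, hpow, map_one, hidx] at hrot
  set x := (U ℝ (2 * ((k + 1 : ℕ) : ℤ))).eval c
  set y := (U ℝ ((2 * k + 1 : ℕ) : ℤ)).eval c
  obtain ⟨a, rfl⟩ : ∃ a : ℝ, γ = a • β := by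
    refine ⟨(1 - x) / y, ?_⟩
    rw [div_eq_inv_mul, mul_smul, eq_inv_smul_iff₀ hU.ne', sub_smul, one_smul, eq_sub_iff_add_eq']
    exact hrot.symm
  have hnorm := hγ.bilForm_self
  simp only [map_smul, LinearMap.smul_apply, smul_eq_mul, hβ.bilForm_self, mul_one] at hnorm hle
  have ha : a = -1 := by nlinarith
  exact hne (by rw [ha, neg_one_smul])

end IsRootOf

lemma exists_zpow_fixes_simpleRoot (hγ : IsRootOf cs γ r) (h0 : 0 ≤ γ)
    (hlt : |bilForm M (simpleRoot m) γ| < 1) :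
    ∃ n : ℤ, n ≠ 0 ∧ geomRep cs ((cs.simple m * r) ^ n) (simpleRoot m) = simpleRoot m := by
  have hm := isRootOf_simple cs m
  obtain ⟨hlo, hhi⟩ := abs_lt.1 hlt
  obtain ⟨b, hbm, hb⟩ := hγ.exists_apply_pos_of_ne_simpleRoot (j := m) h0 <| by
    rintro rfl
    exact hhi.ne (bilForm_simpleRoot_self M m)
  set θ := arccos (-bilForm M (simpleRoot m) γ) with hθdef
  have hθ : bilForm M (simpleRoot m) γ = -cos θ := by
    rw [hθdef, cos_arccos (by linarith) (by linarith), neg_neg]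
  have hsin : 0 < sin θ := by
    rw [hθdef, sin_arccos]
    exact sqrt_pos.2 (by nlinarith)
  have hrot := hm.sin_smul_geomRep_mul_zpow_apply_left hγ hθ
  obtain ⟨n, k, hn, hnk⟩ | ⟨n, hneg, hpos⟩ := exists_int_mul_eq_or_exists_sin_neg hsin (γ m)
  · have hzero : sin (2 * n * θ) = 0 := by
      rw [show 2 * n * θ = (2 * k : ℤ) * π by push_cast; linear_combination 2 * hnk,
        sin_int_mul_pi]
    have hone : sin ((2 * n + 1) * θ) = sin θ := by
      rw [show (2 * n + 1) * θ = θ + k * (2 * π) by linear_combination 2 * hnk,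
        sin_add_int_mul_two_pi]
    have hfix := hrot n
    rw [hzero, hone, zero_smul, add_zero] at hfix
    exact ⟨n, hn, smul_right_injective _ hsin.ne' hfix⟩
  · have hcoord := fun i => DFunLike.congr_fun (hrot n) i
    have hcm := hcoord m
    have hcb := hcoord b
    simp only [Finsupp.smul_apply, Finsupp.add_apply, smul_eq_mul, simpleRoot_apply_self,
      simpleRoot_apply_of_ne hbm, mul_one, mul_zero, zero_add] at hcm hcb
    obtain hge | hle := (hm.conj ((cs.simple m * r) ^ n)).nonneg_or_nonpos
    · exact absurd (mul_nonneg hsin.le (hge b)) (hcb ▸ mul_neg_of_neg_of_pos hneg hb).not_ge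
    · exact absurd (mul_nonpos_of_nonneg_of_nonpos hsin.le (hle m)) (hcm ▸ hpos).not_ge

lemma isOfFinOrder_simple_mul (hγ : IsRootOf cs γ r) (h0 : 0 ≤ γ)
    (hlt : |bilForm M (simpleRoot m) γ| < 1) : IsOfFinOrder (cs.simple m * r) := by
  obtain ⟨n, hn, hfix⟩ := exists_zpow_fixes_simpleRoot hγ h0 hlt
  have hm := isRootOf_simple cs m
  have hconj := hm.conj ((cs.simple m * r) ^ n)
  rw [hfix] at hconj
  refine isOfFinOrder_of_commute_zpow hn ?_ (mul_inv_eq_iff_eq_mul.1 (hm.unique hconj).symm).symm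
  simp [hγ.isReflection.inv]

theorem IsRootOf.isOfFinOrder_mul (hβ : IsRootOf cs β t) (hγ : IsRootOf cs γ r)
    (hlt : |bilForm M β γ| < 1) : IsOfFinOrder (t * r) := by
  obtain ⟨u, m, rfl, rfl⟩ := hβ
  have hδ := hγ.conj u⁻¹
  rw [inv_inv] at hδ
  rw [← geomRep_self_apply_inv cs u γ, bilForm_geomRep] at hlt
  have hfin : IsOfFinOrder (cs.simple m * (u⁻¹ * r * u)) := by
    obtain h0 | h0 := hδ.nonneg_or_nonpos
    · exact isOfFinOrder_simple_mul hδ h0 hlt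
    · exact isOfFinOrder_simple_mul hδ.neg (neg_nonneg.2 h0) (by rwa [map_neg, abs_neg])
  exact IsConj.isOfFinOrder (isConj_iff.2 ⟨u, by group⟩) hfin

end RankTwo

section ConjugationBySimple

variable {cs} {β : B →₀ ℝ} {t : W} {i j : B}

lemma commute_of_bilForm_eq_zero (hij : i ≠ j)
    (h : bilForm M (simpleRoot i) (simpleRoot j) = 0) :
    Commute (cs.simple i) (cs.simple j) := by
  have hpow := cs.simple_mul_simple_pow i j
  rw [label_eq_two_of_bilForm_eq_zero hij h, pow_two] at hpow
  rw [commute_iff_eq, eq_inv_of_mul_eq_one_left hpow, mul_inv_rev, cs.inv_simple, cs.inv_simple]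

lemma commute_of_apply_ne_zero (h0 : 0 ≤ β) (hβj : β j = 0)
    (hj : 0 ≤ bilForm M β (simpleRoot j)) (hi : β i ≠ 0) :
    Commute (cs.simple i) (cs.simple j) := by
  have hne {k : B} (hk : β k ≠ 0) : k ≠ j := fun hkj => hk (hkj ▸ hβj)
  have hterm : ∀ k ∈ β.support, β k * bilForm M (simpleRoot k) (simpleRoot j) ≤ 0 := fun k hk =>
    mul_nonpos_of_nonneg_of_nonpos (h0 k)
      (bilForm_simpleRoot_nonpos (hne (Finsupp.mem_support_iff.1 hk)))
  rw [bilForm_simpleRoot_right] at hj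
  have hzero := (Finset.sum_eq_zero_iff_of_nonpos hterm).1 ((Finset.sum_nonpos hterm).antisymm hj)
    i (Finsupp.mem_support_iff.2 hi)
  exact commute_of_bilForm_eq_zero (hne hi) ((mul_eq_zero.1 hzero).resolve_left hi)

namespace IsRootOf

lemma eq_simpleRoot_of_smul_le (h : IsRootOf cs β t) (h0 : 0 ≤ β) {c : ℝ} (hc : 0 < c)
    (hle : c • β ≤ simpleRoot j) : β = simpleRoot j := by
  by_contra hne
  obtain ⟨i, hij, hi⟩ := h.exists_apply_pos_of_ne_simpleRoot h0 hne
  have hi' := hle i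
  rw [simpleRoot_apply_of_ne hij, Finsupp.smul_apply, smul_eq_mul] at hi'
  exact (mul_pos hc hi).not_ge hi'

lemma length_simple_mul_mul_simple (h : IsRootOf cs β t) (h0 : 0 ≤ β)
    (hj : bilForm M β (simpleRoot j) < 0) :
    cs.length (cs.simple j * t * cs.simple j) = cs.length t + 2 := by
  have hroot := (isRootOf_simple cs j).conj t
  have hpos : 0 ≤ geomRep cs t (simpleRoot j) := by
    rw [h.geomRep_apply, sub_eq_add_neg, ← neg_smul]
    exact add_nonneg (simpleRoot_nonneg j) (smul_nonneg (by linarith) h0)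
  have hne : geomRep cs t (simpleRoot j) ≠ simpleRoot j := by
    rw [h.geomRep_apply, Ne, sub_eq_self, smul_eq_zero]
    simp [hj.ne, h.ne_zero]
  have hpos' := hroot.geomRep_simple_nonneg hpos hne
  rw [← geomRep_mul_apply] at hpos'
  have hlen := cs.not_isRightDescent_iff.1 (not_isRightDescent_of_geomRep_nonneg hpos)
  have hlen' := cs.not_isRightDescent_iff.1 (not_isRightDescent_of_geomRep_nonneg hpos')
  rw [← cs.length_inv (t * cs.simple j), mul_inv_rev, cs.inv_simple, h.isReflection.inv] at hlen
  lia

lemma bilForm_neg_of_length_lt (h : IsRootOf cs β t) (h0 : 0 ≤ β)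
    (hlt : cs.length t < cs.length (cs.simple j * t * cs.simple j)) :
    bilForm M β (simpleRoot j) < 0 := by
  by_contra! hge
  have hdesc : ¬cs.IsRightDescent t j := fun hd => by
    have hlen := cs.isRightDescent_iff.1 hd
    have hle := cs.length_mul_le (cs.simple j) (t * cs.simple j)
    rw [cs.length_simple, ← mul_assoc] at hle
    lia
  have hpos := geomRep_simpleRoot_nonneg hdesc
  rw [h.geomRep_apply, sub_nonneg] at hpos
  obtain hgt | hzero := hge.lt_or_eq
  · obtain rfl := h.eq_simpleRoot_of_smul_le h0 (by linarith) hpos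
    obtain rfl := h.unique (isRootOf_simple cs j)
    simp at hlt
  · have hconj := (isRootOf_simple cs j).conj t
    rw [h.geomRep_apply, ← hzero, mul_zero, zero_smul, sub_zero] at hconj
    have hcomm := (mul_inv_eq_iff_eq_mul.1 (hconj.unique (isRootOf_simple cs j)))
    rw [← hcomm, cs.simple_mul_simple_cancel_right] at hlt
    exact hlt.false

end IsRootOf

end ConjugationBySimple

section Parabolic

variable {cs} {K : Set B} {w : W} {i : B}

lemma geomRep_apply_of_mem_closure (hw : w ∈ Subgroup.closure (cs.simple '' K)) (hi : i ∉ K)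
    (v : B →₀ ℝ) : geomRep cs w v i = v i := by
  have hsimple : ∀ k ∈ K, ∀ v, geomRep cs (cs.simple k) v i = v i := fun k hk v => by
    simp [geomRep_simple_apply, simpleRoot_apply_of_ne (ne_of_mem_of_not_mem hk hi).symm]
  induction hw using Subgroup.closure_induction generalizing v with
  | mem x hx =>
    obtain ⟨k, hk, rfl⟩ := hx
    exact hsimple k hk v
  | one => simp
  | mul x y _ _ hx hy => rw [geomRep_mul_apply, hx, hy]
  | inv x _ hx => rw [← hx, geomRep_self_apply_inv]

lemma mem_of_isRightDescent (hw : w ∈ Subgroup.closure (cs.simple '' K))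
    (hi : cs.IsRightDescent w i) : i ∈ K := by
  by_contra hiK
  have hle := geomRep_simpleRoot_nonpos hi i
  rw [geomRep_apply_of_mem_closure hw hiK] at hle
  norm_num [simpleRoot_apply_self] at hle

end Parabolic

section Bases

/-- The root `w⁻¹ • α_s` of the reflection `w⁻¹ s w` attached to a base `(s, w)`. -/
noncomputable def baseRoot (s : B) (w : W) : B →₀ ℝ := geomRep cs w⁻¹ (simpleRoot s)

variable {cs} {s i j m : B} {w t : W} {J : Set B}

lemma isRootOf_baseRoot : IsRootOf cs (baseRoot cs s w) (w⁻¹ * cs.simple s * w) := by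
  have h := (isRootOf_simple cs s).conj w⁻¹
  rwa [inv_inv] at h

lemma bilForm_baseRoot (v : B →₀ ℝ) :
    bilForm M (baseRoot cs s w) v = bilForm M (simpleRoot s) (geomRep cs w v) := by
  rw [← bilForm_geomRep cs w, baseRoot, geomRep_self_apply_inv]

lemma baseRoot_mul_simple : baseRoot cs s (w * cs.simple j) =
    baseRoot cs s w - (2 * bilForm M (baseRoot cs s w) (simpleRoot j)) • simpleRoot j := by
  rw [baseRoot, mul_inv_rev, cs.inv_simple, geomRep_mul_apply, geomRep_simple_apply, bilForm_comm,
    baseRoot]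

lemma baseRoot_mul_simple_apply_of_ne (hij : i ≠ j) :
    baseRoot cs s (w * cs.simple j) i = baseRoot cs s w i := by
  simp [baseRoot_mul_simple, simpleRoot_apply_of_ne hij]

lemma conj_mul_simple : (w * cs.simple j)⁻¹ * cs.simple s * (w * cs.simple j) =
    cs.simple j * (w⁻¹ * cs.simple s * w) * cs.simple j := by
  simp [mul_assoc]

lemma length_conj_simple_le :
    cs.length (w⁻¹ * cs.simple s * w) ≤ 2 * cs.length w + 1 := by
  have hle := cs.length_mul_le (w⁻¹ * cs.simple s) w
  have hle' := cs.length_mul_le w⁻¹ (cs.simple s)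
  rw [cs.length_inv, cs.length_simple] at hle'
  lia

lemma baseRoot_nonneg (hlen : cs.length (w⁻¹ * cs.simple s * w) = 2 * cs.length w + 1) :
    0 ≤ baseRoot cs s w := by
  refine geomRep_simpleRoot_nonneg fun hdesc => ?_
  have hlt : cs.length (w⁻¹ * cs.simple s) < cs.length w⁻¹ := hdesc
  have hle := cs.length_mul_le (w⁻¹ * cs.simple s) w
  rw [cs.length_inv] at hlt
  lia

lemma length_conj_mul_simple_of_bilForm_neg
    (hlen : cs.length (w⁻¹ * cs.simple s * w) = 2 * cs.length w + 1)
    (hj : bilForm M (baseRoot cs s w) (simpleRoot j) < 0) :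
    ¬cs.IsRightDescent w j ∧
      cs.length ((w * cs.simple j)⁻¹ * cs.simple s * (w * cs.simple j)) =
        2 * cs.length (w * cs.simple j) + 1 := by
  have hgrow := isRootOf_baseRoot.length_simple_mul_mul_simple (baseRoot_nonneg hlen) hj
  have hle := length_conj_simple_le (cs := cs) (s := s) (w := w * cs.simple j)
  rw [← conj_mul_simple] at hgrow
  rw [cs.not_isRightDescent_iff]
  have := cs.length_mul_simple w j
  lia

lemma length_conj_mul_simple_of_isRightDescent
    (hlen : cs.length (w⁻¹ * cs.simple s * w) = 2 * cs.length w + 1)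
    (hj : cs.IsRightDescent w j) :
    cs.length ((w * cs.simple j)⁻¹ * cs.simple s * (w * cs.simple j)) =
      2 * cs.length (w * cs.simple j) + 1 := by
  have hdesc := cs.isRightDescent_iff.1 hj
  have hle := length_conj_simple_le (cs := cs) (s := s) (w := w * cs.simple j)
  rw [conj_mul_simple] at hle ⊢
  have hl := cs.length_simple_mul (w⁻¹ * cs.simple s * w) j
  have hr := cs.length_mul_simple (cs.simple j * (w⁻¹ * cs.simple s * w)) j
  lia

lemma mem_closure_of_baseRoot_apply_eq_zero
    (hlen : cs.length (w⁻¹ * cs.simple s * w) = 2 * cs.length w + 1)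
    (hJ : ∀ i ∉ J, baseRoot cs s w i = 0) :
    s ∈ J ∧ w ∈ Subgroup.closure (cs.simple '' J) := by
  induction hn : cs.length w generalizing w with
  | zero =>
    obtain rfl := cs.length_eq_zero_iff.1 hn
    refine ⟨?_, one_mem _⟩
    by_contra hs
    simpa [baseRoot, simpleRoot_apply_self] using hJ s hs
  | succ n ih =>
    obtain ⟨a, ha⟩ := cs.exists_rightDescent_of_ne_one (w := w) fun h1 => by simp [h1] at hn
    have hdesc := cs.isRightDescent_iff.1 ha
    obtain ⟨v, rfl⟩ : ∃ v, w = v * cs.simple a :=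
      ⟨w * cs.simple a, (cs.simple_mul_simple_cancel_right a).symm⟩
    have hlen' := length_conj_mul_simple_of_isRightDescent hlen ha
    rw [cs.simple_mul_simple_cancel_right] at hlen' hdesc
    have hneg := isRootOf_baseRoot.bilForm_neg_of_length_lt (j := a) (baseRoot_nonneg hlen') (by
      rw [← conj_mul_simple]
      lia)
    have haJ : a ∈ J := by
      by_contra ha
      have hzero := hJ a ha
      rw [baseRoot_mul_simple, Finsupp.sub_apply, Finsupp.smul_apply, simpleRoot_apply_self,
        smul_eq_mul, mul_one] at hzero
      linarith [show 0 ≤ baseRoot cs s v a from baseRoot_nonneg hlen' a]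
    obtain ⟨hs, hv⟩ := ih hlen' (fun i hi => by
      rw [← hJ i hi, baseRoot_mul_simple_apply_of_ne (ne_of_mem_of_not_mem haJ hi).symm]) (by lia)
    exact ⟨hs, mul_mem hv (Subgroup.subset_closure (Set.mem_image_of_mem _ haJ))⟩

lemma mem_support_iff_baseRoot_apply_ne_zero
    (hlen : cs.length (w⁻¹ * cs.simple s * w) = 2 * cs.length w + 1)
    (hJ : IsSupport cs s w J) : i ∈ J ↔ baseRoot cs s w i ≠ 0 := by
  obtain ⟨hs, hw, hmin⟩ := hJ
  constructor
  · obtain ⟨hs', hw'⟩ := mem_closure_of_baseRoot_apply_eq_zero (J := {i | baseRoot cs s w i ≠ 0})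
      hlen (by simp)
    exact @hmin _ hs' hw' i
  · contrapose!
    intro hi
    rw [baseRoot, geomRep_apply_of_mem_closure (inv_mem hw) hi,
      simpleRoot_apply_of_ne (ne_of_mem_of_not_mem hs hi).symm]

lemma bilForm_baseRoot_neg_of_notMem
    (hlen : cs.length (w⁻¹ * cs.simple s * w) = 2 * cs.length w + 1)
    (hJ : IsSupport cs s w J) (hshadow : j ∉ shadow cs s w J) (hperp : j ∉ perpIn cs Set.univ J) :
    bilForm M (baseRoot cs s w) (simpleRoot j) < 0 := by
  have h0 := baseRoot_nonneg hlen
  by_cases hj : j ∈ J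
  · refine isRootOf_baseRoot.bilForm_neg_of_length_lt h0 (not_le.1 fun hle => hshadow ⟨hj, ?_⟩)
    rwa [conj_mul_simple]
  · have hsupp {k : B} : k ∈ J ↔ baseRoot cs s w k ≠ 0 :=
      mem_support_iff_baseRoot_apply_ne_zero hlen hJ
    by_contra! hge
    exact hperp ⟨⟨Set.mem_univ j, hj⟩, fun i hi =>
      (commute_of_apply_ne_zero h0 (not_not.1 (mt hsupp.2 hj)) hge (hsupp.1 hi)).symm⟩

lemma isSupport_mul_simple (hJ : IsSupport cs s w J) (hj : ¬cs.IsRightDescent w j) :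
    IsSupport cs s (w * cs.simple j) (insert j J) := by
  obtain ⟨hs, hw, hmin⟩ := hJ
  have hJ' := Subgroup.closure_mono (Set.image_mono (f := cs.simple) (Set.subset_insert j J))
  refine ⟨.inr hs, mul_mem (hJ' hw) (Subgroup.subset_closure ⟨j, .inl rfl, rfl⟩),
    fun K hsK hwK => ?_⟩
  have hjK : j ∈ K := mem_of_isRightDescent hwK <| by
    rwa [cs.isRightDescent_iff_not_isRightDescent_mul, cs.simple_mul_simple_cancel_right]
  refine Set.insert_subset hjK (hmin K hsK ?_)
  rw [← cs.simple_mul_simple_cancel_right (w := w) j]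
  exact mul_mem hwK (Subgroup.subset_closure ⟨j, hjK, rfl⟩)

lemma perpIn_univ_antitone : Antitone (perpIn cs Set.univ) := fun _ _ hJK _ hi =>
  ⟨⟨Set.mem_univ _, fun h => hi.1.2 (hJK h)⟩, fun k hk => hi.2 k (hJK hk)⟩

lemma isOfFinOrder_simple_mul_of_isLeftInversion (hbase : IsBase cs s w)
    (ht : cs.IsLeftInversion w t) : IsOfFinOrder (cs.simple s * t) :=
  (closure_pair_finite_iff (cs.simple_mul_simple_self s) ht.1.mul_self).1 (hbase.2 t ht.1 ht.2)

lemma isBase_mul_simple (hbase : IsBase cs s w)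
    (hj : bilForm M (baseRoot cs s w) (simpleRoot j) < 0)
    (hfin : IsOfFinOrder (cs.simple s * (w * cs.simple j * w⁻¹))) :
    IsBase cs s (w * cs.simple j) := by
  refine ⟨(length_conj_mul_simple_of_bilForm_neg hbase.1 hj).2, fun t ht hlt => ?_⟩
  rw [closure_pair_finite_iff (cs.simple_mul_simple_self s) ht.mul_self]
  by_cases hw : cs.IsLeftInversion w t
  · exact isOfFinOrder_simple_mul_of_isLeftInversion hbase hw
  · rwa [eq_conj_of_isLeftInversion_mul_simple ⟨ht, hlt⟩ hw]

lemma bilForm_baseRoot_lt_one (hbase : IsBase cs s w)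
    (hinf : ¬IsOfFinOrder (cs.simple s * (w * cs.simple m * w⁻¹))) :
    bilForm M (baseRoot cs s w) (simpleRoot m) < 1 := by
  have hm := (isRootOf_simple cs m).conj w
  set t := w * cs.simple m * w⁻¹ with htdef
  have hne : geomRep cs w (simpleRoot m) ≠ simpleRoot s := fun h => by
    rw [h] at hm
    exact hinf (by simp [hm.unique (isRootOf_simple cs s)])
  have hpos : 0 ≤ geomRep cs w (simpleRoot m) := by
    refine geomRep_simpleRoot_nonneg fun hdesc => hinf ?_
    refine isOfFinOrder_simple_mul_of_isLeftInversion hbase ⟨hm.isReflection, ?_⟩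
    rwa [htdef, inv_mul_cancel_right]
  have hsm := hm.conj (cs.simple s)
  have hnot : ¬cs.IsLeftInversion w (cs.simple s * t * (cs.simple s)⁻¹) := fun hinv => by
    have hfin := isOfFinOrder_simple_mul_of_isLeftInversion hbase hinv
    rw [cs.inv_simple, ← mul_assoc, cs.simple_mul_simple_cancel_left, ← isOfFinOrder_inv_iff,
      mul_inv_rev, cs.inv_simple, hm.isReflection.inv] at hfin
    exact hinf hfin
  rw [hsm.isLeftInversion_iff (hm.geomRep_simple_nonneg hpos hne)] at hnot
  have hle := (hsm.conj w⁻¹).nonneg_or_nonpos.resolve_right hnot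
  rw [geomRep_simple_apply, ← bilForm_baseRoot, map_sub, map_smul, geomRep_inv_apply_self,
    sub_nonneg, ← baseRoot] at hle
  by_contra! hge
  have hβ := isRootOf_baseRoot.eq_simpleRoot_of_smul_le (baseRoot_nonneg hbase.1) (by linarith) hle
  exact hne (by rw [← hβ, baseRoot, geomRep_self_apply_inv])

lemma bilForm_baseRoot_le_neg_one (hbase : IsBase cs s w)
    (hinf : ¬IsOfFinOrder (cs.simple s * (w * cs.simple m * w⁻¹))) :
    bilForm M (baseRoot cs s w) (simpleRoot m) ≤ -1 := by
  by_contra! hgt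
  refine hinf ((isRootOf_simple cs s).isOfFinOrder_mul ((isRootOf_simple cs m).conj w) ?_)
  rw [← bilForm_baseRoot]
  exact abs_lt.2 ⟨hgt, bilForm_baseRoot_lt_one hbase hinf⟩

lemma not_isOfFinOrder_iff_bilForm_baseRoot_le (hbase : IsBase cs s w) :
    ¬IsOfFinOrder (cs.simple s * (w * cs.simple m * w⁻¹)) ↔
      bilForm M (baseRoot cs s w) (simpleRoot m) ≤ -1 := by
  refine ⟨bilForm_baseRoot_le_neg_one hbase, fun hle => ?_⟩
  rw [bilForm_baseRoot] at hle
  refine (isRootOf_simple cs s).not_isOfFinOrder_mul ((isRootOf_simple cs m).conj w) ?_ hle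
  intro hneg
  have hβ : baseRoot cs s w = -simpleRoot m := by
    rw [baseRoot, eq_neg_iff_add_eq_zero, ← geomRep_inv_apply_self cs w (simpleRoot m), hneg,
      map_neg, add_neg_cancel]
  have h0 := baseRoot_nonneg hbase.1
  rw [hβ, neg_nonneg] at h0
  exact simpleRoot_ne_zero m (h0.antisymm (simpleRoot_nonneg m))

end Bases

end GeometricRep

/-- A complete marking `((s, w), m)` whose base `(s, w)` has support `J`. -/
structure IsCompleteMarking (cs : CoxeterSystem M W) (s : B) (w : W) (m : B) (J : Set B) :
    Prop where
  isBase : IsBase cs s w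
  isSupport : IsSupport cs s w J
  notMem_perpIn : m ∉ perpIn cs Set.univ J
  not_isOfFinOrder : ¬IsOfFinOrder (cs.simple s * (w * cs.simple m * w⁻¹))

open GeometricRep in
theorem extend_complete_marking_avoiding_shadow_general {cs : CoxeterSystem M W} {s m j : B}
    {w : W} {J : Set B} (h : IsCompleteMarking cs s w m J) (hshadow : j ∉ shadow cs s w J)
    (hperp : j ∉ perpIn cs Set.univ J)
    (hfin : IsOfFinOrder (cs.simple s * (w * cs.simple j * w⁻¹))) :
    IsCompleteMarking cs s (w * cs.simple j) m (insert j J) := by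
  have hj := bilForm_baseRoot_neg_of_notMem h.isBase.1 h.isSupport hshadow hperp
  have hbase := isBase_mul_simple h.isBase hj hfin
  refine ⟨hbase, isSupport_mul_simple h.isSupport
    (length_conj_mul_simple_of_bilForm_neg h.isBase.1 hj).1,
    fun hm => h.notMem_perpIn (perpIn_univ_antitone (Set.subset_insert j J) hm), ?_⟩
  have hm := (not_isOfFinOrder_iff_bilForm_baseRoot_le h.isBase).1 h.not_isOfFinOrder
  have hjm : j ≠ m := by
    rintro rfl
    exact h.not_isOfFinOrder hfin
  rw [not_isOfFinOrder_iff_bilForm_baseRoot_le hbase]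
  calc bilForm M (baseRoot cs s (w * cs.simple j)) (simpleRoot m)
      = bilForm M (baseRoot cs s w) (simpleRoot m) - 2 * (bilForm M (baseRoot cs s w)
          (simpleRoot j) * bilForm M (simpleRoot j) (simpleRoot m)) := by
        simp [baseRoot_mul_simple, mul_assoc]
    _ ≤ bilForm M (baseRoot cs s w) (simpleRoot m) := by
        linarith [mul_nonneg_of_nonpos_of_nonpos hj.le
          (bilForm_simpleRoot_nonpos (M := M) hjm)]
    _ ≤ -1 := hm

/-- If `((s,w),m)` is a complete marking with support `J` and shadow `J̃`,
and `j ∈ S ∖ (J̃ ∪ J⊥)` is such that `s · (w j w⁻¹)` has finite order, then `((s, wj), m)`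
is again a complete marking. -/
theorem extend_complete_marking_avoiding_shadow
    [Finite B] (cs : CoxeterSystem M W) (s m : B) (w : W) (J : Set B)
    (hbase : IsBase cs s w) (hJ : IsSupport cs s w J)
    (hm : m ∉ perpIn cs Set.univ J)
    (hcomplete : ¬ IsOfFinOrder (cs.simple s * (w * cs.simple m * w⁻¹)))
    (j : B) (hj1 : j ∉ shadow cs s w J) (hj2 : j ∉ perpIn cs Set.univ J)
    (hfin : IsOfFinOrder (cs.simple s * (w * cs.simple j * w⁻¹))) :
    IsBase cs s (w * cs.simple j) ∧
      ∃ J' : Set B, IsSupport cs s (w * cs.simple j) J' ∧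
        m ∉ perpIn cs Set.univ J' ∧
        ¬ IsOfFinOrder (cs.simple s *
            ((w * cs.simple j) * cs.simple m * (w * cs.simple j)⁻¹)) := by
  have h := extend_complete_marking_avoiding_shadow_general
    ⟨hbase, hJ, hm, hcomplete⟩ hj1 hj2 hfin
  exact ⟨h.isBase, insert j J, h.isSupport, h.notMem_perpIn, h.not_isOfFinOrder⟩
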